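/- There exists a semigroup S that is DSC, regular, and bisimple, but is not a group. -/

import Mathlib

/-- DSC property for a multiplication given explicitly as a function: every
subset of `S × S` containing the diagonal and closed under the (coordinatewise)
multiplication is symmetric and transitive, i.e. a congruence. -/
def IsDSCOf {S : Type*} (mul : S → S → S) : Prop :=
  ∀ ρ : Set (S × S),
    (∀ x : S, (x, x) ∈ ρ) →
    (∀ p q : S × S, p ∈ ρ → q ∈ ρ → (mul p.1 q.1, mul p.2 q.2) ∈ ρ) →
    ((∀ x y : S, ((x, y) : S × S) ∈ ρ → ((y, x) : S × S) ∈ ρ) ∧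
     (∀ x y z : S, ((x, y) : S × S) ∈ ρ → ((y, z) : S × S) ∈ ρ →
        ((x, z) : S × S) ∈ ρ))

/-- A semigroup is a group if it has a (two-sided) identity element with
respect to which every element has a two-sided inverse. -/
def IsGroupOf {S : Type*} (mul : S → S → S) : Prop :=
  ∃ e : S, (∀ s : S, mul e s = s ∧ mul s e = s) ∧
    ∀ s : S, ∃ t : S, mul s t = e ∧ mul t s = e

/-- Green's relation `R`: `x R y` iff `x S¹ = y S¹`. -/
def GreenROf {S : Type*} (mul : S → S → S) (x y : S) : Prop :=
  (x = y ∨ ∃ u : S, x = mul y u) ∧ (y = x ∨ ∃ u : S, y = mul x u)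

/-- Green's relation `L`: `x L y` iff `S¹ x = S¹ y`. -/
def GreenLOf {S : Type*} (mul : S → S → S) (x y : S) : Prop :=
  (x = y ∨ ∃ u : S, x = mul u y) ∧ (y = x ∨ ∃ u : S, y = mul u x)

/-! The witness: finite-to-one maps `ℕ → ℕ` modulo finite difference, under composition. -/

namespace FinToOne

open Filter

/-- Finite-to-one maps. -/
abbrev Map : Type := {f : ℕ → ℕ // Tendsto f cofinite cofinite}

/-- Equality up to finitely many points. -/
instance setoid : Setoid Map where
  r f g := ∀ᶠ n in cofinite, f.1 n = g.1 n
  iseqv :=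
    { refl := fun _ => Eventually.of_forall fun _ => rfl
      symm := fun h => h.mono fun _ h => h.symm
      trans := fun h k => (h.and k).mono fun _ h => h.1.trans h.2 }

/-- The carrier. -/
abbrev S : Type := Quotient setoid

/-- Composition of finite-to-one maps. -/
def comp (f g : Map) : Map := ⟨f.1 ∘ g.1, f.2.comp g.2⟩

/-- Composition of classes. -/
def mul : S → S → S :=
  Quotient.map₂ comp (by
    intro f f' hf g g' hg
    have h1 : ∀ᶠ n in cofinite, f.1 (g.1 n) = f'.1 (g.1 n) := g.2.eventually hf
    have hg' : ∀ᶠ n in cofinite, g.1 n = g'.1 n := hg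
    refine (h1.and hg').mono fun n h => ?_
    change f.1 (g.1 n) = f'.1 (g'.1 n)
    rw [h.1, h.2])

theorem mk_eq (f g : Map) (h : ∀ n, f.1 n = g.1 n) : (⟦f⟧ : S) = ⟦g⟧ :=
  Quotient.sound (Eventually.of_forall h)

theorem mul_assoc' (x y z : S) : mul (mul x y) z = mul x (mul y z) := by
  induction x using Quotient.inductionOn
  induction y using Quotient.inductionOn
  induction z using Quotient.inductionOn
  rfl

/-- Extending a finite-to-one map along an injection by the identity. -/
theorem ext_tendsto {ι : Type} {w g : ι → ℕ}
    (hg : Tendsto g cofinite cofinite) :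
    Tendsto (Function.extend w g id) cofinite cofinite := by
  classical
  intro K hK
  rw [mem_map, mem_cofinite]
  have h1 : (g ⁻¹' K)ᶜ.Finite := mem_cofinite.1 (hg hK)
  refine ((h1.image w).union (mem_cofinite.1 hK)).subset ?_
  intro m hm
  by_cases h : ∃ i, w i = m
  · left
    refine ⟨h.choose, ?_, h.choose_spec⟩
    have hm' : Function.extend w g id m ∉ K := hm
    rw [Function.extend_def, dif_pos h] at hm'
    exact hm'
  · right
    have hm' : Function.extend w g id m ∉ K := hm
    rw [Function.extend_apply' _ _ _ h] at hm'
    exact hm'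

theorem exists_section (a : Map) :
    ∃ t : Map, ∀ v ∈ Set.range a.1, a.1 (t.1 v) = v := by
  have hs : ∀ v : Set.range a.1, ∃ n, a.1 n = v := fun v => v.2
  choose g hg using hs
  have hinj : Function.Injective g := by
    intro u v h
    apply Subtype.ext
    rw [← hg u, ← hg v, h]
  refine ⟨⟨Function.extend Subtype.val g id, ext_tendsto hinj.tendsto_cofinite⟩, ?_⟩
  intro v hv
  have := Subtype.val_injective.extend_apply g id (⟨v, hv⟩ : Set.range a.1)
  change a.1 (Function.extend Subtype.val g id v) = v
  rw [this]
  exact hg ⟨v, hv⟩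

theorem exists_seq (a b : Map) (h : ¬ ∀ᶠ n in cofinite, a.1 n = b.1 n) :
    ∃ y : ℕ → ℕ, Function.Injective (Sum.elim (a.1 ∘ y) (b.1 ∘ y)) := by
  have hf : ∃ᶠ n in cofinite, a.1 n ≠ b.1 n := not_eventually.1 h
  have : Std.Symm (fun x y =>
      a.1 y ≠ a.1 x ∧ a.1 y ≠ b.1 x ∧ b.1 y ≠ a.1 x ∧ b.1 y ≠ b.1 x) :=
    ⟨fun x y h => ⟨h.1.symm, h.2.2.1.symm, h.2.1.symm, h.2.2.2.symm⟩⟩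
  obtain ⟨y, hy, hr⟩ := exists_seq_of_forall_finset_exists'
    (fun n => a.1 n ≠ b.1 n)
    (fun x y => a.1 y ≠ a.1 x ∧ a.1 y ≠ b.1 x ∧ b.1 y ≠ a.1 x ∧ b.1 y ≠ b.1 x)
    (h := by
      intro s _
      have hev : ∀ᶠ y in cofinite, ∀ x ∈ s,
          a.1 y ≠ a.1 x ∧ a.1 y ≠ b.1 x ∧ b.1 y ≠ a.1 x ∧ b.1 y ≠ b.1 x := by
        rw [Filter.eventually_all_finset]
        intro x _
        have key : ∀ (c : Map) (m : ℕ), ∀ᶠ y in cofinite, c.1 y ≠ m := fun c m =>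
          c.2.eventually (Set.finite_singleton m).eventually_cofinite_notMem
        exact (key a _).and ((key a _).and ((key b _).and (key b _)))
      exact (hf.and_eventually hev).exists)
  refine ⟨y, ?_⟩
  have hr' : ∀ m n, m ≠ n → a.1 (y n) ≠ a.1 (y m) ∧ a.1 (y n) ≠ b.1 (y m) ∧
      b.1 (y n) ≠ a.1 (y m) ∧ b.1 (y n) ≠ b.1 (y m) := fun m n h => hr h
  rintro (m | m) (n | n) hmn <;> by_cases e : m = n
  · rw [e]
  · exact absurd hmn.symm (hr' m n e).1
  · subst e
    exact absurd hmn (hy m)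
  · exact absurd hmn.symm (hr' m n e).2.2.1
  · subst e
    exact absurd hmn.symm (hy m)
  · exact absurd hmn.symm (hr' m n e).2.1
  · rw [e]
  · exact absurd hmn.symm (hr' m n e).2.2.2

/-- Distinct elements can be moved to an arbitrary pair by a two-sided translation. -/
theorem separate (a b c d : S) (hab : a ≠ b) :
    ∃ x y : S, mul (mul x a) y = c ∧ mul (mul x b) y = d := by
  induction a using Quotient.inductionOn with | _ a
  induction b using Quotient.inductionOn with | _ b
  induction c using Quotient.inductionOn with | _ c
  induction d using Quotient.inductionOn with | _ d
  have h : ¬ ∀ᶠ n in cofinite, a.1 n = b.1 n := fun h => hab (Quotient.sound h)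
  obtain ⟨y, hy⟩ := exists_seq a b h
  have hyi : Function.Injective y := by
    intro m n h
    have : Sum.elim (a.1 ∘ y) (b.1 ∘ y) (Sum.inl m)
        = Sum.elim (a.1 ∘ y) (b.1 ∘ y) (Sum.inl n) := by simp [h]
    exact Sum.inl_injective (hy this)
  have hg : Tendsto (Sum.elim c.1 d.1) cofinite cofinite := by
    intro K hK
    rw [mem_map, mem_cofinite]
    have h1 := mem_cofinite.1 (c.2 hK)
    have h2 := mem_cofinite.1 (d.2 hK)
    refine ((h1.image Sum.inl).union (h2.image Sum.inr)).subset ?_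
    rintro (m | m) hm
    · exact Or.inl ⟨m, hm, rfl⟩
    · exact Or.inr ⟨m, hm, rfl⟩
  refine ⟨⟦⟨_, ext_tendsto (w := Sum.elim (a.1 ∘ y) (b.1 ∘ y)) hg⟩⟧,
    ⟦⟨y, hyi.tendsto_cofinite⟩⟧, mk_eq _ _ fun n => ?_, mk_eq _ _ fun n => ?_⟩
  · exact hy.extend_apply (Sum.elim c.1 d.1) id (Sum.inl n)
  · exact hy.extend_apply (Sum.elim c.1 d.1) id (Sum.inr n)

theorem dsc : IsDSCOf mul := by
  intro ρ hd hm
  by_cases h : ∃ a b : S, (a, b) ∈ ρ ∧ a ≠ b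
  · obtain ⟨a, b, hab, hne⟩ := h
    have all : ∀ c d : S, (c, d) ∈ ρ := by
      intro c d
      obtain ⟨x, y, rfl, rfl⟩ := separate a b c d hne
      exact hm _ _ (hm _ _ (hd x) hab) (hd y)
    exact ⟨fun _ _ _ => all _ _, fun _ _ _ _ _ => all _ _⟩
  · have heq : ∀ a b : S, (a, b) ∈ ρ → a = b := by
      intro a b hab
      by_contra hne
      exact h ⟨a, b, hab, hne⟩
    refine ⟨fun x y hxy => ?_, fun x y z hxy hyz => ?_⟩
    · rw [heq x y hxy]
      exact hd y
    · rw [heq x y hxy]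
      exact hyz

theorem regular (s : S) : ∃ t : S, mul (mul s t) s = s := by
  induction s using Quotient.inductionOn with | _ a
  obtain ⟨t, ht⟩ := exists_section a
  exact ⟨⟦t⟧, mk_eq _ _ fun n => ht _ ⟨n, rfl⟩⟩

theorem range_infinite (a : Map) : (Set.range a.1).Infinite := by
  intro h
  have h1 : ∀ᶠ n in cofinite, a.1 n ∉ Set.range a.1 :=
    a.2.eventually h.eventually_cofinite_notMem
  obtain ⟨n, hn⟩ := h1.exists
  exact hn ⟨n, rfl⟩

/-- If the range of `f` lies in the range of `g` then `f` factors through `g`. -/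
theorem factor (f g : Map) (h : ∀ n, f.1 n ∈ Set.range g.1) : ∃ u : S, (⟦f⟧ : S) = mul ⟦g⟧ u := by
  obtain ⟨t, ht⟩ := exists_section g
  exact ⟨⟦comp t f⟧, mk_eq _ _ fun n => (ht _ (h n)).symm⟩

theorem bisimple (x y : S) : ∃ z : S, GreenROf mul x z ∧ GreenLOf mul z y := by
  induction x using Quotient.inductionOn with | _ a
  induction y using Quotient.inductionOn with | _ b
  have ia : Infinite (Set.range a.1) := (range_infinite a).to_subtype
  have ib : Infinite (Set.range b.1) := (range_infinite b).to_subtype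
  obtain ⟨e⟩ : Nonempty (Set.range b.1 ≃ Set.range a.1) := nonempty_equiv_of_countable
  have hφ : Function.Injective (fun v => (e v : ℕ)) :=
    Subtype.val_injective.comp e.injective
  have hψ : Function.Injective (fun v => (e.symm v : ℕ)) :=
    Subtype.val_injective.comp e.symm.injective
  let φ : Map := ⟨Function.extend Subtype.val (fun v => (e v : ℕ)) id,
    ext_tendsto hφ.tendsto_cofinite⟩
  let ψ : Map := ⟨Function.extend Subtype.val (fun v => (e.symm v : ℕ)) id,
    ext_tendsto hψ.tendsto_cofinite⟩
  have hφ' : ∀ v : Set.range b.1, φ.1 v = e v := fun v =>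
    Subtype.val_injective.extend_apply (fun v => (e v : ℕ)) id v
  have hψ' : ∀ v : Set.range a.1, ψ.1 v = e.symm v := fun v =>
    Subtype.val_injective.extend_apply (fun v => (e.symm v : ℕ)) id v
  have hz : ∀ n, (comp φ b).1 n = e ⟨b.1 n, n, rfl⟩ := fun n => hφ' ⟨b.1 n, n, rfl⟩
  refine ⟨⟦comp φ b⟧, ⟨Or.inr (factor _ _ fun n => ?_), Or.inr (factor _ _ fun n => ?_)⟩,
    Or.inr ⟨⟦φ⟧, rfl⟩, Or.inr ⟨⟦ψ⟧, mk_eq _ _ fun n => ?_⟩⟩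
  · obtain ⟨m, hm⟩ := (e.symm ⟨a.1 n, n, rfl⟩).2
    refine ⟨m, ?_⟩
    rw [hz]
    have : (⟨b.1 m, m, rfl⟩ : Set.range b.1) = e.symm ⟨a.1 n, n, rfl⟩ := Subtype.ext hm
    rw [this, e.apply_symm_apply]
  · rw [hz]
    exact (e _).2
  · change b.1 n = ψ.1 ((comp φ b).1 n)
    rw [hz, hψ', e.symm_apply_apply]

theorem not_group : ¬ IsGroupOf mul := by
  rintro ⟨e, he, hinv⟩
  have hhalf : Tendsto (fun n : ℕ => n / 2) cofinite cofinite := by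
    rw [Nat.cofinite_eq_atTop]
    exact Nat.tendsto_div_const_atTop (by norm_num)
  have hid : e = ⟦⟨id, tendsto_id⟩⟧ := by
    have h1 := (he ⟦⟨id, tendsto_id⟩⟧).1
    have h2 : mul e ⟦⟨id, tendsto_id⟩⟧ = e := by
      induction e using Quotient.inductionOn
      rfl
    exact h2.symm.trans h1
  obtain ⟨t, -, ht⟩ := hinv ⟦⟨_, hhalf⟩⟧
  rw [hid] at ht
  induction t using Quotient.inductionOn with | _ t
  obtain ⟨t, htt⟩ := t
  have h : ∀ᶠ n in cofinite, t (n / 2) = n := Quotient.exact ht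
  rw [Nat.cofinite_eq_atTop, eventually_atTop] at h
  obtain ⟨N, hN⟩ := h
  have h1 := hN (2 * N) (by omega)
  have h2 := hN (2 * N + 1) (by omega)
  rw [show (2 * N + 1) / 2 = 2 * N / 2 by omega] at h2
  omega

/-- The witness is nonempty, so the main theorem is not proved by the empty semigroup. -/
theorem nonempty_S : Nonempty S := ⟨⟦⟨id, tendsto_id⟩⟧⟩

end FinToOne

/-- there exists a semigroup which is DSC, regular and bisimple
(any two elements are `D = R ∘ L`-related), but is not a group. -/
theorem exists_nongroup_regular_bisimple_DSC :
    ∃ (S : Type) (mul : S → S → S),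
      (∀ x y z : S, mul (mul x y) z = mul x (mul y z)) ∧
      IsDSCOf mul ∧
      (∀ s : S, ∃ t : S, mul (mul s t) s = s) ∧
      (∀ x y : S, ∃ z : S, GreenROf mul x z ∧ GreenLOf mul z y) ∧
      ¬ IsGroupOf mul := by
  exact ⟨FinToOne.S, FinToOne.mul, FinToOne.mul_assoc', FinToOne.dsc, FinToOne.regular,
    FinToOne.bisimple, FinToOne.not_group⟩
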